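/- For every Maaß cusp form φ for SL(2,ℤ) there exists a constant C > 0 such that |φ(x + iy)| ≤ C·(log y)^{1/2}·e^{−2πy} for all x ∈ ℝ and y > 2. (This is the exponential decay obtained by Bernstein's method of analytic continuation of φ to the crown domain.) -/

import Mathlib

open scoped Interval

/-- A Maaß cusp form for `SL(2,ℤ)` with spectral parameter `lam`, regarded as a
function `φ : ℂ → ℂ` on the upper half-plane `{z : 0 < Im z}`:
smooth, `SL(2,ℤ)`-invariant, an eigenfunction of the hyperbolic Laplacian
`Δ = -y²(∂ₓ² + ∂ᵧ²)` with eigenvalue `λ(1-λ)`, of moderate growth, and cuspidal. -/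
def IsMaassCuspForm (lam : ℂ) (φ : ℂ → ℂ) : Prop :=
  ContDiffOn ℝ (⊤ : ℕ∞) φ {z : ℂ | 0 < z.im} ∧
  (∀ γ : Matrix.SpecialLinearGroup (Fin 2) ℤ, ∀ z : ℂ, 0 < z.im →
      φ (((γ.1 0 0 : ℂ) * z + (γ.1 0 1 : ℂ)) / ((γ.1 1 0 : ℂ) * z + (γ.1 1 1 : ℂ))) = φ z) ∧
  (∀ z : ℂ, 0 < z.im →
      -(z.im : ℂ) ^ 2 * (iteratedDeriv 2 (fun s : ℝ => φ (z + (s : ℂ))) 0 +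
        iteratedDeriv 2 (fun s : ℝ => φ (z + (s : ℂ) * Complex.I)) 0) =
      lam * (1 - lam) * φ z) ∧
  (∃ A C₀ : ℝ, 0 < A ∧ 0 < C₀ ∧ ∀ x y : ℝ, 1 < y →
      ‖φ ((x : ℂ) + (y : ℂ) * Complex.I)‖ ≤ C₀ * y ^ A) ∧
  (∀ z : ℂ, 0 < z.im → (∫ t in (0 : ℝ)..1, φ (z + (t : ℂ))) = 0)

section helpers
open Filter Topology

lemma second_deriv_test (P P' : ℝ → ℝ) (P'' y : ℝ) (h1 : ∀ᶠ t in 𝓝 y, HasDerivAt P (P' t) t)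
    (h2 : HasDerivAt P' P'' y) (hm : IsLocalMin P y) : 0 ≤ P'' := by
  by_contra hneg
  push Not at hneg
  have hd : deriv P =ᶠ[𝓝 y] P' := h1.mono fun t ht => ht.deriv
  have hdd : deriv (deriv P) y = P'' := by rw [hd.deriv_eq, h2.deriv]
  have hM : IsLocalMax P y := isLocalMax_of_deriv_deriv_neg (by rw [hdd]; exact hneg)
    hm.deriv_eq_zero h1.self_of_nhds.continuousAt
  have hc : P =ᶠ[𝓝 y] fun _ => P y := by
    filter_upwards [hm, hM] with t ht ht'
    exact le_antisymm ht' ht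
  have : deriv (deriv P) y = 0 := by
    rw [hc.deriv.deriv_eq]; simp
  linarith

lemma alg_aux (ω s t u : ℝ) (hω : 2 ≤ ω) (hs : 0 ≤ s) (ht : 0 ≤ t) (hu : 0 ≤ u) :
    ω^2 * (1 - s) - 2 * ω * t - 2 * u ≤ (ω^2 - t) * (1 - s) := by
  nlinarith [mul_nonneg ht hs, mul_nonneg (sub_nonneg.2 hω) ht]

set_option maxHeartbeats 1000000 in
lemma comp_ode (a a' a'' : ℝ → ℂ) (μ : ℂ) (ω y0 M A C₀ : ℝ) (hω : 2 ≤ ω) (hy0 : 1 ≤ y0)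
    (hy0' : 2 * ‖μ‖ ≤ y0) (h1 : ∀ y, 0 < y → HasDerivAt a (a' y) y)
    (h2 : ∀ y, 0 < y → HasDerivAt a' (a'' y) y)
    (hode : ∀ y, 0 < y → a'' y = ((ω:ℂ) ^ 2 - μ / (y:ℂ) ^ 2) * a y)
    (hgr : ∀ y, y0 ≤ y → ‖a y‖ ≤ C₀ * y ^ A) (hM : ‖a y0‖ ≤ M) :
    ∀ y, y0 ≤ y → ‖a y‖ ≤ 2 * M * Real.exp (-(ω * (y - y0))) := by
  set c := ‖μ‖ with hc
  have hc0 : 0 ≤ c := norm_nonneg _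
  have hM0 : 0 ≤ M := (norm_nonneg _).trans hM
  set E : ℝ → ℝ := fun y => Real.exp (-(ω * (y - y0))) with hE
  have hEd : ∀ y, HasDerivAt E (-(ω * E y)) y := by
    intro y
    have := ((((hasDerivAt_id y).sub_const y0).const_mul ω).neg).exp
    refine HasDerivAt.congr_deriv this ?_
    show E y * -(ω * 1) = _
    ring
  -- main claim
  have main : ∀ ε > 0, ∀ y, y0 ≤ y → ‖a y‖ ≤ 2 * M * (E y * (1 - c / y)) + ε * Real.exp y := by
    intro ε hε y2 hy2
    by_contra hneg
    push Not at hneg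
    set F : ℝ → ℝ := fun y => 2 * M * (E y * (1 - c / y)) + ε * Real.exp y - ‖a y‖ with hF
    have hh : ∀ y, y0 ≤ y → 1/2 ≤ 1 - c / y := by
      intro y hy
      have : c / y ≤ 1/2 := by
        rw [div_le_iff₀ (by linarith)]; linarith
      linarith
    have hlo := (isLittleO_rpow_exp_atTop A).bound (c := ε / (|C₀| + 1)) (by positivity)
    obtain ⟨R0, hR0⟩ := eventually_atTop.1 hlo
    set R := max R0 y2 with hR
    have hRy : y2 ≤ R := le_max_right _ _
    have hR1 : y0 ≤ R := hy2.trans hRy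
    have hFR : 0 ≤ F R := by
      have := hR0 R (le_max_left _ _)
      rw [Real.norm_eq_abs, Real.norm_eq_abs, abs_of_nonneg (Real.rpow_nonneg (by linarith) _),
        abs_of_pos (Real.exp_pos _)] at this
      have h3 : C₀ * R ^ A ≤ ε * Real.exp R := by
        have hRA : 0 ≤ R ^ A := Real.rpow_nonneg (by linarith) _
        calc C₀ * R ^ A ≤ (|C₀| + 1) * R ^ A := by
              gcongr; linarith [le_abs_self C₀]
          _ ≤ (|C₀| + 1) * (ε / (|C₀| + 1) * Real.exp R) := by gcongr
          _ = _ := by field_simp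
      have h4 := hgr R hR1
      have h5 : 0 ≤ 2 * M * (E R * (1 - c / R)) := by
        have := hh R hR1
        have : 0 ≤ 1 - c / R := by linarith
        positivity
      simp only [hF]; linarith
    have hF0 : 0 ≤ F y0 := by
      have := hh y0 le_rfl
      have hE0 : E y0 = 1 := by simp [hE]
      have : M ≤ 2 * M * (E y0 * (1 - c / y0)) := by
        rw [hE0]; nlinarith
      have := Real.exp_pos y0
      simp only [hF]; nlinarith
    have hFc : ContinuousOn F (Set.Icc y0 R) := by
      have hac : ContinuousOn a (Set.Icc y0 R) := fun y hy =>
        (h1 y (by linarith [hy.1])).continuousAt.continuousWithinAt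
      have hEc : Continuous E := by fun_prop
      have : ContinuousOn (fun y : ℝ => c / y) (Set.Icc y0 R) :=
        continuousOn_const.div continuousOn_id (fun y hy => by
          have := hy.1; show y ≠ 0; intro h; linarith)
      exact (((hEc.continuousOn.mul (continuousOn_const.sub this)).const_smul (2*M)).add
        (by fun_prop)).sub hac.norm
    obtain ⟨y1, hy1, hmin⟩ := isCompact_Icc.exists_isMinOn ⟨y2, hy2, hRy⟩ hFc
    have hF2 : F y2 < 0 := by simp only [hF]; linarith
    have hF1 : F y1 < 0 := lt_of_le_of_lt (hmin ⟨hy2, hRy⟩) hF2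
    have hl : y0 < y1 := lt_of_le_of_ne hy1.1 (by rintro rfl; linarith)
    have hr : y1 < R := lt_of_le_of_ne hy1.2 (by rintro h; rw [h] at hF1; linarith)
    have hy1p : 0 < y1 := by linarith
    have ha1 : 0 < ‖a y1‖ := by
      have := hh y1 hy1.1
      have : 0 ≤ 1 - c / y1 := by linarith
      have : 0 ≤ 2 * M * (E y1 * (1 - c / y1)) := by positivity
      have := Real.exp_pos y1
      have : 0 < ε * Real.exp y1 := by positivity
      simp only [hF] at hF1
      linarith
    -- phase
    obtain ⟨θ, hθ1, hθ2⟩ : ∃ θ : ℂ, ‖θ‖ = 1 ∧ θ * a y1 = ‖a y1‖ := by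
      have hne : a y1 ≠ 0 := norm_pos_iff.1 ha1
      refine ⟨‖a y1‖ / a y1, by simp [hne], by field_simp⟩
    have hre : ∀ y, (θ * a y).re ≤ ‖a y‖ := fun y => by
      have := Complex.re_le_norm (θ * a y)
      rwa [norm_mul, hθ1, one_mul] at this
    set P : ℝ → ℝ := fun y => 2 * M * (E y * (1 - c / y)) + ε * Real.exp y - (θ * a y).re with hP
    set P' : ℝ → ℝ := fun y => 2 * M * (-(ω * E y) * (1 - c / y) + E y * (c / y^2)) + ε * Real.exp y - (θ * a' y).re with hP'
    have hq : ∀ y, 0 < y → HasDerivAt (fun y : ℝ => 1 - c / y) (c / y^2) y := by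
      intro y hy
      have := ((hasDerivAt_inv hy.ne').const_mul c).const_sub 1
      refine HasDerivAt.congr_deriv (this.congr_of_eventuallyEq (Eventually.of_forall fun t => ?_)) ?_
      · show 1 - c / t = 1 - c * t⁻¹
        ring
      · ring
    have hq2 : ∀ y, 0 < y → HasDerivAt (fun y : ℝ => c / y^2) (-2 * c / y^3) y := by
      intro y hy
      have := (((hasDerivAt_pow 2 y)).inv (by positivity)).const_mul c
      refine HasDerivAt.congr_deriv (this.congr_of_eventuallyEq (Eventually.of_forall fun t => ?_)) ?_
      · show c / t ^ 2 = c * (t ^ 2)⁻¹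
        ring
      · field_simp
        norm_num
        ring
    have hre1 : ∀ (b : ℝ → ℂ) (b' : ℂ) (y : ℝ), HasDerivAt b b' y →
        HasDerivAt (fun y => (θ * b y).re) ((θ * b').re) y := by
      intro b b' y hb
      exact (Complex.reCLM.hasFDerivAt.comp_hasDerivAt y (hb.const_mul θ))
    have hPd : ∀ y, 0 < y → HasDerivAt P (P' y) y := fun y hy =>
      (((((hEd y).mul (hq y hy)).const_mul (2*M))).add ((Real.hasDerivAt_exp y).const_mul ε)).sub
        (hre1 _ _ _ (h1 y hy))
    have hPd2 := (((((((hEd y1).const_mul ω).neg.mul (hq y1 hy1p)).add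
      ((hEd y1).mul (hq2 y1 hy1p))).const_mul (2*M))).add
        ((Real.hasDerivAt_exp y1).const_mul ε)).sub (hre1 _ _ _ (h2 y1 hy1p))
    have hloc : IsLocalMin P y1 := by
      filter_upwards [Icc_mem_nhds hl hr] with y hy
      have h3 : F y1 ≤ F y := hmin hy
      have h4 : P y1 = F y1 := by simp only [hP, hF]; rw [hθ2]; simp
      have h5 : F y ≤ P y := by simp only [hP, hF]; linarith [hre y]
      linarith
    have key := second_deriv_test P P' _ y1 ((lt_mem_nhds hy1p).mono hPd) hPd2 hloc
    have h6 : (ω ^ 2 - c / y1 ^ 2) * ‖a y1‖ ≤ (θ * a'' y1).re := by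
      rw [hode y1 hy1p, mul_left_comm, hθ2, Complex.re_mul_ofReal]
      gcongr
      have e1 : (((ω:ℂ)^2 - μ / (y1:ℂ)^2)).re = ω^2 - μ.re / y1^2 := by
        rw [Complex.sub_re, ← Complex.ofReal_pow, ← Complex.ofReal_pow, Complex.div_ofReal_re,
          Complex.ofReal_re]
      rw [e1]
      have : μ.re ≤ c := Complex.re_le_norm μ
      gcongr
    have h7 : c / y1^2 ≤ 1/2 := by
      rw [div_le_iff₀ (by positivity)]; nlinarith
    set q := ω ^ 2 - c / y1 ^ 2 with hqd
    have hq1 : 1 ≤ q := by nlinarith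
    have h8 : ‖a y1‖ > 2 * M * (E y1 * (1 - c / y1)) + ε * Real.exp y1 := by
      simp only [hF] at hF1; linarith
    have h9 : q * ‖a y1‖ > q * (2 * M * (E y1 * (1 - c / y1)) + ε * Real.exp y1) := by
      gcongr
    have h10 : ε * Real.exp y1 ≤ q * (ε * Real.exp y1) := by
      have : 0 ≤ ε * Real.exp y1 := by positivity
      nlinarith
    have hcy3 : 0 ≤ c / y1^3 := by positivity
    have hcy : 0 ≤ c / y1 := by positivity
    have hcy2 : 0 ≤ c / y1^2 := by positivity
    have h11 : 2 * M * (E y1 * (ω^2 * (1 - c/y1) - 2 * ω * (c / y1^2) - 2 * (c / y1^3))) ≤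
        2 * M * (E y1 * (q * (1 - c/y1))) := by
      have : 0 < E y1 := Real.exp_pos _
      gcongr
      rw [hqd]
      exact alg_aux _ _ _ _ hω hcy hcy2 hcy3
    have h12 : -2 * c / y1^3 = -2 * (c / y1^3) := by ring
    rw [h12] at key
    have h13 : 0 ≤ 2 * M * (E y1 * (ω^2 * (1 - c/y1) - 2 * ω * (c / y1^2) - 2 * (c / y1^3))) +
        ε * Real.exp y1 - (θ * a'' y1).re := by
      refine key.trans_eq ?_
      show 2 * M * (-(ω * -(ω * E y1)) * (1 - c / y1) + -(ω * E y1) * (c / y1 ^ 2) +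
        (-(ω * E y1) * (c / y1 ^ 2) + E y1 * (-2 * (c / y1 ^ 3)))) + ε * Real.exp y1 -
        (θ * a'' y1).re = _
      ring
    have h14 : q * (2 * M * (E y1 * (1 - c / y1)) + ε * Real.exp y1) =
      2 * M * (E y1 * (q * (1 - c/y1))) + q * (ε * Real.exp y1) := by ring
    linarith
  intro y hy
  refine le_of_forall_pos_le_add fun δ hδ => ?_
  have h3 := main (δ / Real.exp y) (by positivity) y hy
  have h4 : δ / Real.exp y * Real.exp y = δ := by field_simp
  rw [h4] at h3
  have h5 : E y * (1 - c / y) ≤ E y := by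
    have : 0 < E y := Real.exp_pos _
    have : 0 ≤ c / y := div_nonneg hc0 (by linarith)
    nlinarith
  have : 2 * M * (E y * (1 - c / y)) ≤ 2 * M * E y := by gcongr
  linarith

def UH : Set ℂ := {z : ℂ | 0 < z.im}

lemma isOpen_UH : IsOpen UH := isOpen_lt continuous_const Complex.continuous_im

noncomputable def Dv (v : ℂ) (f : ℂ → ℂ) (z : ℂ) : ℂ := fderiv ℝ f z v

lemma Dv_contDiffOn {f : ℂ → ℂ} (v : ℂ) (hf : ContDiffOn ℝ (⊤ : ℕ∞) f UH) :
    ContDiffOn ℝ (⊤ : ℕ∞) (Dv v f) UH :=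
  (hf.fderiv_of_isOpen isOpen_UH (m := (⊤ : ℕ∞)) (by norm_cast)).clm_apply contDiffOn_const

lemma Dv_hasDerivAt {f : ℂ → ℂ} (v w : ℂ) (hf : ContDiffOn ℝ (⊤ : ℕ∞) f UH) (s : ℝ)
    (h : w + s * v ∈ UH) :
    HasDerivAt (fun t : ℝ => f (w + t * v)) (Dv v f (w + s * v)) s := by
  have h1 : HasFDerivAt f (fderiv ℝ f (w + s * v)) (w + s * v) :=
    ((hf.contDiffAt (isOpen_UH.mem_nhds h)).differentiableAt (by simp)).hasFDerivAt
  have h2 : HasDerivAt (fun t : ℝ => w + t * v) v s := by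
    have := ((Complex.ofRealCLM.hasDerivAt (x := s)).mul_const v).const_add w
    simpa using this
  exact h1.comp_hasDerivAt s h2

lemma iter2 {f : ℂ → ℂ} (v z : ℂ) (hf : ContDiffOn ℝ (⊤ : ℕ∞) f UH) (hz : z ∈ UH) :
    iteratedDeriv 2 (fun s : ℝ => f (z + s * v)) 0 = Dv v (Dv v f) z := by
  have hc : Continuous fun s : ℝ => z + s * v := by fun_prop
  have hev : ∀ᶠ s : ℝ in 𝓝 0, z + s * v ∈ UH :=
    (isOpen_UH.preimage hc).mem_nhds (by simpa using hz)
  have e : deriv (fun s : ℝ => f (z + s * v)) =ᶠ[𝓝 0] fun s : ℝ => Dv v f (z + s * v) :=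
    hev.mono fun s hs => (Dv_hasDerivAt v z hf s hs).deriv
  rw [iteratedDeriv_succ, iteratedDeriv_one, e.deriv_eq,
    (Dv_hasDerivAt v z (Dv_contDiffOn v hf) 0 (by simpa using hz)).deriv]
  simp

lemma mem_UH (x y : ℝ) (hy : 0 < y) : (x:ℂ) + y * Complex.I ∈ UH := by simpa [UH] using hy

/-- the exponential kernel -/
noncomputable def mker (n : ℤ) (x : ℝ) : ℂ := Complex.exp (-(2 * Real.pi * Complex.I * n * x))

lemma mker_hasDerivAt (n : ℤ) (x : ℝ) :
    HasDerivAt (mker n) (-(2 * Real.pi * Complex.I * n) * mker n x) x := by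
  have := (((Complex.ofRealCLM.hasDerivAt (x := x)).const_mul
    (2 * Real.pi * Complex.I * n)).neg).cexp
  refine HasDerivAt.congr_deriv this ?_
  show mker n x * -(2 * Real.pi * Complex.I * n * 1) = _
  ring

lemma mker_norm (n : ℤ) (x : ℝ) : ‖mker n x‖ = 1 := by
  have : -(2 * Real.pi * Complex.I * n * x) = ((-(2 * Real.pi * n * x) : ℝ) : ℂ) * Complex.I := by
    push_cast; ring
  rw [mker, this, Complex.norm_exp_ofReal_mul_I]

lemma mker_cont (n : ℤ) : Continuous (mker n) :=
  continuous_iff_continuousAt.2 fun x => (mker_hasDerivAt n x).continuousAt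

lemma mker_zero (n : ℤ) : mker n 0 = 1 := by simp [mker]

lemma mker_one (n : ℤ) : mker n 1 = 1 := by
  rw [mker, Complex.exp_eq_one_iff]
  exact ⟨-n, by push_cast; ring⟩

/-- Fourier coefficient -/
noncomputable def FC (f : ℂ → ℂ) (n : ℤ) (y : ℝ) : ℂ :=
  ∫ x in (0:ℝ)..1, f ((x:ℂ) + y * Complex.I) * mker n x

lemma line_cont {f : ℂ → ℂ} (hf : ContinuousOn f UH) (y : ℝ) (hy : 0 < y) :
    Continuous fun x : ℝ => f ((x:ℂ) + y * Complex.I) :=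
  hf.comp_continuous (by fun_prop) fun x => mem_UH x y hy

lemma FC_bound {f : ℂ → ℂ} (n : ℤ) (y B : ℝ) (h : ∀ x : ℝ, ‖f ((x:ℂ) + y * Complex.I)‖ ≤ B) :
    ‖FC f n y‖ ≤ B := by
  have := intervalIntegral.norm_integral_le_of_norm_le_const (a := 0) (b := 1)
    (f := fun x : ℝ => f ((x:ℂ) + y * Complex.I) * mker n x) (C := B)
    (fun x _ => by rw [norm_mul, mker_norm, mul_one]; exact h x)
  simpa [FC] using this

lemma FC_hasDerivAt {f : ℂ → ℂ} (hf : ContDiffOn ℝ (⊤ : ℕ∞) f UH) (n : ℤ) (y : ℝ) (hy : 0 < y) :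
    HasDerivAt (FC f n) (FC (Dv Complex.I f) n y) y := by
  have hD := (Dv_contDiffOn Complex.I hf).continuousOn
  have hcont2 : ContinuousOn (fun p : ℝ × ℝ => Dv Complex.I f ((p.1:ℂ) + p.2 * Complex.I))
      (Set.Icc 0 1 ×ˢ Set.Icc (y/2) (2*y)) :=
    hD.comp (by fun_prop) fun p hp => mem_UH _ _ (by have := hp.2.1; linarith)
  obtain ⟨B, hB⟩ := (isCompact_Icc.prod isCompact_Icc).exists_bound_of_continuousOn hcont2
  refine (intervalIntegral.hasDerivAt_integral_of_dominated_loc_of_deriv_le (bound := fun _ => B)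
    (F := fun (y x : ℝ) => f ((x:ℂ) + y * Complex.I) * mker n x)
    (F' := fun (y x : ℝ) => Dv Complex.I f ((x:ℂ) + y * Complex.I) * mker n x)
    (s := Set.Icc (y/2) (2*y)) (Icc_mem_nhds (by linarith) (by linarith)) ?_ ?_ ?_ ?_ ?_ ?_).2
  · filter_upwards [lt_mem_nhds hy] with t ht
    exact ((line_cont hf.continuousOn t ht).mul (mker_cont n)).aestronglyMeasurable
  · exact ((line_cont hf.continuousOn y hy).mul (mker_cont n)).intervalIntegrable _ _
  · exact ((line_cont hD y hy).mul (mker_cont n)).aestronglyMeasurable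
  · refine Eventually.of_forall fun x hx t ht => ?_
    rw [norm_mul, mker_norm, mul_one]
    rw [Set.uIoc_of_le zero_le_one] at hx
    exact hB (x, t) ⟨⟨hx.1.le, hx.2⟩, ht⟩
  · exact intervalIntegrable_const
  · refine Eventually.of_forall fun x hx t ht => ?_
    exact (Dv_hasDerivAt Complex.I x hf t (mem_UH _ _ (by have := ht.1; linarith))).mul_const _

lemma Dv_one_per {f : ℂ → ℂ}
    (hp : ∀ z ∈ UH, f (z + 1) = f z) : ∀ z ∈ UH, Dv 1 f (z + 1) = Dv 1 f z := by
  intro z hz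
  have e : (fun w => f (w + 1)) =ᶠ[𝓝 z] f := by
    filter_upwards [isOpen_UH.mem_nhds hz] with w hw using hp w hw
  rw [Dv, Dv, ← e.fderiv_eq, fderiv_comp_add_right]

lemma FC_ibp {f : ℂ → ℂ} (hf : ContDiffOn ℝ (⊤ : ℕ∞) f UH) (hp : ∀ z ∈ UH, f (z + 1) = f z)
    (n : ℤ) (y : ℝ) (hy : 0 < y) :
    FC (Dv 1 f) n y = (2 * Real.pi * Complex.I * n) * FC f n y := by
  have hD := (Dv_contDiffOn 1 hf).continuousOn
  have := intervalIntegral.integral_mul_deriv_eq_deriv_mul (a := 0) (b := 1)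
    (v := fun x : ℝ => f ((x:ℂ) + y * Complex.I)) (u := mker n)
    (v' := fun x : ℝ => Dv 1 f ((x:ℂ) + y * Complex.I))
    (u' := fun x => -(2 * Real.pi * Complex.I * n) * mker n x)
    (fun x _ => mker_hasDerivAt n x)
    (fun x _ => by
      have := Dv_hasDerivAt 1 (y * Complex.I) hf x (by
        rw [mul_one, add_comm]; exact mem_UH x y hy)
      simpa only [mul_one, add_comm] using this)
    ((continuous_const.mul (mker_cont n)).intervalIntegrable _ _)
    ((line_cont hD y hy).intervalIntegrable _ _)
  have hper : f (((1:ℝ):ℂ) + y * Complex.I) = f (((0:ℝ):ℂ) + y * Complex.I) := by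
    have := hp _ (mem_UH 0 y hy)
    rw [← this]; congr 1; push_cast; ring
  rw [mker_one, mker_zero, hper, sub_self, zero_sub, ← intervalIntegral.integral_neg] at this
  rw [FC, FC, ← intervalIntegral.integral_const_mul]
  calc _ = ∫ x in (0:ℝ)..1, mker n x * Dv 1 f ((x:ℂ) + y * Complex.I) := by
        congr 1; ext x; ring
    _ = _ := this
    _ = _ := by congr 1; ext x; ring

lemma fourier_bound (f : ℝ → ℂ) (hc : Continuous f) (hp : ∀ x, f (x + 1) = f x) (b : ℤ → ℝ)
    (hb : Summable b) (h : ∀ n : ℤ, ‖∫ x in (0:ℝ)..1, f x * mker n x‖ ≤ b n) (x : ℝ) :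
    ‖f x‖ ≤ ∑' n, b n := by
  have hper : Function.Periodic f (1:ℝ) := hp
  have hcl : Continuous (hper.lift : AddCircle (1:ℝ) → ℂ) := continuous_coinduced_dom.mpr (by exact hc)
  let g : C(AddCircle (1:ℝ), ℂ) := ⟨hper.lift, hcl⟩
  have hco : ∀ n, fourierCoeff g n = ∫ x in (0:ℝ)..1, f x * mker n x := by
    intro n
    rw [fourierCoeff_eq_intervalIntegral g n 0]
    simp only [div_one, one_smul, zero_add]
    congr 1; ext x
    rw [fourier_coe_apply, smul_eq_mul, mul_comm]
    congr 1
    rw [mker]; congr 1; push_cast; ring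
  have hs : Summable (fourierCoeff g) :=
    Summable.of_norm_bounded hb fun n => by rw [hco]; exact h n
  have hsum := has_pointwise_sum_fourier_series_of_summable hs (x : AddCircle (1:ℝ))
  have : g (x : AddCircle (1:ℝ)) = f x := rfl
  rw [← this, ← hsum.tsum_eq]
  refine tsum_of_norm_bounded hb.hasSum fun n => ?_
  rw [norm_smul, hco]
  have : ‖fourier n (x : AddCircle (1:ℝ))‖ = 1 := by rw [fourier_apply, Circle.norm_coe]
  rw [this, mul_one]
  exact h n

lemma summable_exp_abs : Summable fun n : ℤ => Real.exp (-(2 * Real.pi * |(n:ℝ)|)) := by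
  have h : Summable fun n : ℕ => Real.exp ((n:ℝ) * (-(2 * Real.pi))) :=
    Real.summable_exp_nat_mul_iff.2 (by linarith [Real.pi_pos])
  refine Summable.of_nat_of_neg (h.congr fun n => ?_) (h.congr fun n => ?_)
  · congr 1; push_cast; rw [abs_of_nonneg (by positivity)]; ring
  · congr 1; push_cast; rw [abs_neg, abs_of_nonneg (by positivity)]; ring

set_option maxHeartbeats 1000000 in
lemma exp_decay (lam : ℂ) (φ : ℂ → ℂ) (hφ : IsMaassCuspForm lam φ) :
    ∃ K : ℝ, 0 < K ∧ ∀ x y : ℝ, 2 < y →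
      ‖φ ((x : ℂ) + (y : ℂ) * Complex.I)‖ ≤ K * Real.exp (-(2 * Real.pi * y)) := by
  obtain ⟨hs, hinv, hlap, ⟨A, C₀, hA, hC₀, hgr⟩, hcusp⟩ := hφ
  change ContDiffOn ℝ (⊤ : ℕ∞) φ UH at hs
  have hper : ∀ z ∈ UH, φ (z + 1) = φ z := by
    intro z hz
    have := hinv ⟨!![1, 1; 0, 1], by simp⟩ z hz
    simpa using this
  set μ := lam * (1 - lam) with hμ
  have hpi := Real.pi_gt_three
  set y0 : ℝ := 2 + 2 * ‖μ‖ with hy0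
  have hn0 : 0 ≤ ‖μ‖ := norm_nonneg _
  set M := C₀ * y0 ^ A with hM
  have hM0 : 0 < M := by positivity
  have hFgr : ∀ n y, 1 < y → ‖FC φ n y‖ ≤ C₀ * y ^ A := fun n y hy =>
    FC_bound n y _ fun x => hgr x y hy
  have hzero : ∀ y, 0 < y → FC φ 0 y = 0 := by
    intro y hy
    have := hcusp (y * Complex.I) (by simpa using hy)
    rw [← this, FC]
    congr 1; ext x; simp [mker, add_comm]
  have hode : ∀ (n : ℤ) (y : ℝ), 0 < y → FC (Dv Complex.I (Dv Complex.I φ)) n y =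
      (((2 * Real.pi * |(n:ℝ)| : ℝ):ℂ) ^ 2 - μ / (y:ℂ) ^ 2) * FC φ n y := by
    intro n y hy
    have hs1 := Dv_contDiffOn 1 hs
    have hs11 := Dv_contDiffOn 1 hs1
    have e1 : FC (Dv 1 (Dv 1 φ)) n y = (2 * Real.pi * Complex.I * n) ^ 2 * FC φ n y := by
      rw [FC_ibp hs1 (Dv_one_per hper) n y hy, FC_ibp hs hper n y hy]; ring
    have hyc : (y:ℂ) ≠ 0 := by exact_mod_cast hy.ne'
    have e2 : FC (Dv Complex.I (Dv Complex.I φ)) n y =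
        - FC (Dv 1 (Dv 1 φ)) n y - μ / (y:ℂ)^2 * FC φ n y := by
      simp only [FC]
      rw [← intervalIntegral.integral_const_mul, ← intervalIntegral.integral_neg,
        ← intervalIntegral.integral_sub]
      · congr 1; ext x
        have hz := mem_UH x y hy
        have h3 := hlap _ hz
        have e3 := iter2 1 _ hs hz
        simp only [mul_one] at e3
        rw [e3, iter2 Complex.I _ hs hz] at h3
        have him : ((x:ℂ) + y * Complex.I).im = y := by simp
        rw [him] at h3
        have h4 : Dv Complex.I (Dv Complex.I φ) ((x:ℂ) + y * Complex.I) =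
            - Dv 1 (Dv 1 φ) ((x:ℂ) + y * Complex.I) - μ / (y:ℂ)^2 * φ ((x:ℂ) + y * Complex.I) := by
          field_simp
          linear_combination -h3
        rw [h4]; ring
      · exact (((line_cont hs11.continuousOn y hy).mul (mker_cont n)).neg).intervalIntegrable _ _
      · exact (continuous_const.mul ((line_cont hs.continuousOn y hy).mul
          (mker_cont n))).intervalIntegrable _ _
    rw [e2, e1]
    have e5 : (((2 * Real.pi * |(n:ℝ)| : ℝ):ℂ) ^ 2) = (2 * Real.pi * n) ^ 2 := by
      rw [← Complex.ofReal_pow, mul_pow, sq_abs]; push_cast; ring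
    rw [e5]
    linear_combination (-(2 * Real.pi * n)^2 * FC φ n y) * Complex.I_sq
  have hdec : ∀ n : ℤ, n ≠ 0 → ∀ y, y0 ≤ y →
      ‖FC φ n y‖ ≤ 2 * M * Real.exp (-(2 * Real.pi * |(n:ℝ)| * (y - y0))) := by
    intro n hn
    have hn1 : (1:ℝ) ≤ |(n:ℝ)| := by exact_mod_cast Int.one_le_abs hn
    refine comp_ode (FC φ n) (FC (Dv Complex.I φ) n) (FC (Dv Complex.I (Dv Complex.I φ)) n) μ
      (2 * Real.pi * |(n:ℝ)|) y0 M A C₀ (by nlinarith) (by linarith) (by linarith)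
      (fun y hy => FC_hasDerivAt hs n y hy)
      (fun y hy => FC_hasDerivAt (Dv_contDiffOn _ hs) n y hy) (hode n)
      (fun y hy => hFgr n y (by linarith)) (hFgr n y0 (by linarith))
  set S := ∑' n : ℤ, Real.exp (-(2 * Real.pi * |(n:ℝ)|)) with hS
  have hS0 : 0 ≤ S := tsum_nonneg fun n => (Real.exp_pos _).le
  have hbig : ∀ x y : ℝ, y0 + 1 ≤ y → ‖φ ((x:ℂ) + y * Complex.I)‖ ≤
      2 * M * Real.exp (2 * Real.pi * (1 + y0)) * S * Real.exp (-(2 * Real.pi * y)) := by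
    intro x y hy
    have hyp : 0 < y := by linarith
    have := fourier_bound (fun x : ℝ => φ ((x:ℂ) + y * Complex.I)) (line_cont hs.continuousOn y hyp)
      (fun x => by
        rw [← hper _ (mem_UH x y hyp)]; congr 1; push_cast; ring)
      (fun n => 2 * M * Real.exp (2 * Real.pi * (1 + y0)) * Real.exp (-(2 * Real.pi * y)) *
        Real.exp (-(2 * Real.pi * |(n:ℝ)|))) (summable_exp_abs.mul_left _)
      (fun n => by
        change ‖FC φ n y‖ ≤ _
        by_cases hn : n = 0
        · subst hn
          rw [hzero y hyp, norm_zero]; positivity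
        · refine (hdec n hn y (by linarith)).trans ?_
          rw [mul_assoc (2 * M), mul_assoc (2 * M), ← Real.exp_add, ← Real.exp_add]
          have hn1 : (1:ℝ) ≤ |(n:ℝ)| := by exact_mod_cast Int.one_le_abs hn
          gcongr
          have h3 : 0 ≤ (|(n:ℝ)| - 1) * (y - y0 - 1) := mul_nonneg (by linarith) (by linarith)
          nlinarith [mul_nonneg (by positivity : 0 ≤ 2 * Real.pi) h3]) x
    refine this.trans_eq ?_
    rw [tsum_mul_left]; ring
  refine ⟨2 * M * Real.exp (2 * Real.pi * (1 + y0)) * S +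
    C₀ * (y0 + 1) ^ A * Real.exp (2 * Real.pi * (y0 + 1)), by positivity, fun x y hy => ?_⟩
  rw [add_mul]
  rcases le_total (y0 + 1) y with h | h
  · refine (hbig x y h).trans (le_add_of_nonneg_right (by positivity))
  · refine le_trans ?_ (le_add_of_nonneg_left (by positivity))
    refine (hgr x y (by linarith)).trans ?_
    rw [mul_assoc, ← Real.exp_add]
    have h1 : y ^ A ≤ (y0 + 1) ^ A := Real.rpow_le_rpow (by linarith) h hA.le
    have h2 : 1 ≤ Real.exp (2 * Real.pi * (y0 + 1) + -(2 * Real.pi * y)) :=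
      Real.one_le_exp (by nlinarith)
    calc C₀ * y ^ A ≤ C₀ * (y0 + 1) ^ A := by gcongr
      _ ≤ _ := le_mul_of_one_le_right (by positivity) h2

end helpers

/-- every Maaß cusp form for `SL(2,ℤ)` satisfies
`|φ(x+iy)| ≤ C (log y)^{1/2} e^{-2πy}` for `y > 2` (Bernstein's method). -/
theorem stmt_12 (lam : ℂ) (φ : ℂ → ℂ) (hφ : IsMaassCuspForm lam φ) :
    ∃ C : ℝ, 0 < C ∧ ∀ x y : ℝ, 2 < y →
      ‖φ ((x : ℂ) + (y : ℂ) * Complex.I)‖ ≤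
        C * Real.sqrt (Real.log y) * Real.exp (-(2 * Real.pi * y)) := by
  obtain ⟨K, hK, h⟩ := exp_decay lam φ hφ
  have hl : 0 < Real.sqrt (Real.log 2) := Real.sqrt_pos.2 (Real.log_pos (by norm_num))
  refine ⟨K / Real.sqrt (Real.log 2), by positivity, fun x y hy => (h x y hy).trans ?_⟩
  gcongr
  rw [div_mul_eq_mul_div, le_div_iff₀ hl]
  gcongr
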